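/- Let {C₁, C₂, C₃} be an unextendible family of three pairwise disjoint maximal commuting Pauli classes in dimension d = 4. Write C₁ = {U₁, V₁, W₁} and C₂ = {U₂, V₂, W₂}, where W₁ is equal up to phase to U₁V₁ and W₂ is equal up to phase to U₂V₂, labeled so that [U₁, U₂] = 0 and [V₁, V₂] = 0 (such a labeling exists since each element of C₁ commutes with exactly one element of C₂). Then C₃ consists, up to phase, exactly of the three operators U₁U₂, V₁V₂, and U₁V₁U₂V₂. -/

import Mathlib

open Matrix

noncomputable section

/-- Matrices on the Hilbert space of `n` qubits, with rows and columns indexed by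
bit strings `Fin n → Fin 2`. -/
abbrev QMat (n : ℕ) := Matrix (Fin n → Fin 2) (Fin n → Fin 2) ℂ

/-- The single-qubit identity. -/
def pI : Matrix (Fin 2) (Fin 2) ℂ := 1

/-- The single-qubit Pauli X. -/
def pX : Matrix (Fin 2) (Fin 2) ℂ := !![0, 1; 1, 0]

/-- The single-qubit Pauli Y. -/
def pY : Matrix (Fin 2) (Fin 2) ℂ := !![0, -Complex.I; Complex.I, 0]

/-- The single-qubit Pauli Z. -/
def pZ : Matrix (Fin 2) (Fin 2) ℂ := !![1, 0; 0, -1]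

/-- The `n`-fold Kronecker product `W 0 ⊗ ⋯ ⊗ W (n-1)`, realized on indices
`Fin n → Fin 2`. -/
def kron (n : ℕ) (W : Fin n → Matrix (Fin 2) (Fin 2) ℂ) : QMat n :=
  fun v w => ∏ j, W j (v j) (w j)

/-- `M` is an `n`-qubit Pauli operator: an `n`-fold Kronecker product of matrices
from `{I₂, X, Y, Z}`. -/
def IsPauliOp (n : ℕ) (M : QMat n) : Prop :=
  ∃ W : Fin n → Matrix (Fin 2) (Fin 2) ℂ,
    (∀ j, W j = pI ∨ W j = pX ∨ W j = pY ∨ W j = pZ) ∧ M = kron n W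

/-- Two matrices are equal up to phase if one is a nonzero scalar multiple of the other. -/
def PhaseEq {m : Type*} (A B : Matrix m m ℂ) : Prop := ∃ c : ℂ, c ≠ 0 ∧ A = c • B

/-- A maximal commuting Pauli class in dimension `d = 2 ^ n`: a set of `d - 1`
pairwise commuting non-identity `n`-qubit Pauli operators, pairwise distinct up to phase. -/
def IsMaxClass (n : ℕ) (C : Set (QMat n)) : Prop :=
  C.Finite ∧ C.ncard = 2 ^ n - 1 ∧
  (∀ U ∈ C, IsPauliOp n U ∧ U ≠ 1) ∧
  (∀ U ∈ C, ∀ V ∈ C, U * V = V * U) ∧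
  (∀ U ∈ C, ∀ V ∈ C, U ≠ V → ¬ PhaseEq U V)

/-- Two classes are disjoint if no member of one is equal up to phase to a member of the other. -/
def ClassDisjoint {n : ℕ} (C D : Set (QMat n)) : Prop :=
  ∀ U ∈ C, ∀ V ∈ D, ¬ PhaseEq U V

/-- Two classes are equal up to phase (as sets of operators). -/
def ClassPhaseEq {n : ℕ} (C D : Set (QMat n)) : Prop :=
  (∀ U ∈ C, ∃ V ∈ D, PhaseEq U V) ∧ (∀ V ∈ D, ∃ U ∈ C, PhaseEq U V)

/-- The standard Hermitian inner product on `ι → ℂ` (conjugate-linear in the first slot). -/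
def cinner {ι : Type*} [Fintype ι] (x y : ι → ℂ) : ℂ :=
  ∑ k, (starRingEnd ℂ) (x k) * y k

open Module Equiv

/-!
Up to phase, two-qubit Pauli operators are the vectors of a four-dimensional symplectic space over
the field with two elements, multiplication being addition and commutation being orthogonality;
maximal commuting classes are the triples of nonzero vectors of totally isotropic planes. Index two
disjoint triples `a`, `b` so that `a i` and `b j` are orthogonal exactly when `i = j`. Then every
nonzero vector outside both triples is some `a i + b j`, and a triple disjoint from both is the
graph `{a i + b (σ i)}` of an involution `σ` of three points. If `σ` were a transposition, the graph
of another transposition, which agrees with `σ` nowhere, would extend the family; hence `σ = 1` and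
the third triple is `{a i + b i}`.
-/

lemma zmod_two_eq_zero_or_one : ∀ s : ZMod 2, s = 0 ∨ s = 1 := by
  decide

lemma zmod_two_eq_iff : ∀ {s t : ZMod 2}, s = t ↔ (s = 0 ↔ t = 0) := by
  decide

lemma orthogonal_eq_self_of_le {K V : Type*} [Field K] [AddCommGroup V] [Module K V]
    [FiniteDimensional K V] {ω : LinearMap.BilinForm K V} (hω : ω.Nondegenerate)
    {W : Submodule K V} (hW : W ≤ ω.orthogonal W) (hdim : finrank K V = 2 * finrank K W) :
    ω.orthogonal W = W := by
  refine (Submodule.eq_of_le_of_finrank_eq hW ?_).symm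
  rw [LinearMap.BilinForm.finrank_orthogonal hω]
  lia

/-- A family of distinct nonzero vectors that are pairwise orthogonal, and orthogonal to themselves,
for the form `ω`. Such are the labels of the members of a maximal commuting class. -/
structure IsIsotropic {R V ι : Type*} [CommSemiring R] [AddCommMonoid V] [Module R V]
    (ω : LinearMap.BilinForm R V) (a : ι → V) : Prop where
  injective : Function.Injective a
  ne_zero : ∀ i, a i ≠ 0
  apply_eq_zero : ∀ i j, ω (a i) (a j) = 0

lemma IsIsotropic.comp_injective {R V ι κ : Type*} [CommSemiring R] [AddCommMonoid V] [Module R V]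
    {ω : LinearMap.BilinForm R V} {a : ι → V} (ha : IsIsotropic ω a) {f : κ → ι}
    (hf : Function.Injective f) : IsIsotropic ω (a ∘ f) where
  injective := ha.injective.comp hf
  ne_zero i := ha.ne_zero (f i)
  apply_eq_zero i j := ha.apply_eq_zero (f i) (f j)

section BinarySpace

variable {V : Type*} [AddCommGroup V] [Module (ZMod 2) V] {ω : LinearMap.BilinForm (ZMod 2) V}
  {a b c : Fin 3 → V}

lemma mem_span_pair_zmod_two {x y p : V} :
    p ∈ Submodule.span (ZMod 2) {x, y} ↔ p = 0 ∨ p = x ∨ p = y ∨ p = x + y := by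
  rw [Submodule.mem_span_pair]
  constructor
  · rintro ⟨s, t, rfl⟩
    obtain rfl | rfl := zmod_two_eq_zero_or_one s <;>
      obtain rfl | rfl := zmod_two_eq_zero_or_one t <;> simp
  · rintro (rfl | rfl | rfl | rfl)
    exacts [⟨0, 0, by simp⟩, ⟨1, 0, by simp⟩, ⟨0, 1, by simp⟩, ⟨1, 1, by simp⟩]

lemma linearIndependent_pair_zmod_two {x y : V} (hx : x ≠ 0) (hy : y ≠ 0) (hxy : x ≠ y) :
    LinearIndependent (ZMod 2) ![x, y] := by
  rw [LinearIndependent.pair_iff' hx]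
  intro s
  obtain rfl | rfl := zmod_two_eq_zero_or_one s
  · simpa using hy.symm
  · simpa using hxy

lemma IsIsotropic.orthogonal_span_pair {ι : Type*} {a : ι → V} (ha : IsIsotropic ω a)
    (hω : ω.Nondegenerate) (hV : finrank (ZMod 2) V = 4) {i j : ι} (hij : i ≠ j) :
    ω.orthogonal (.span (ZMod 2) {a i, a j}) = .span (ZMod 2) {a i, a j} := by
  have : FiniteDimensional (ZMod 2) V := .of_finrank_pos (by lia)
  refine orthogonal_eq_self_of_le hω ?_ ?_
  · intro p hp q hq
    rw [mem_span_pair_zmod_two] at hp hq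
    rcases hp with rfl | rfl | rfl | rfl <;> rcases hq with rfl | rfl | rfl | rfl <;>
      simp [ha.apply_eq_zero]
  · have hli := linearIndependent_pair_zmod_two (ha.ne_zero i) (ha.ne_zero j) (ha.injective.ne hij)
    have := finrank_span_eq_card hli
    rw [Matrix.range_cons_cons_empty, Fintype.card_fin] at this
    lia

lemma IsIsotropic.eq_of_forall_apply_eq_zero {ι : Type*} {a : ι → V} (ha : IsIsotropic ω a)
    (hω : ω.Nondegenerate) (hV : finrank (ZMod 2) V = 4) {i j : ι} (hij : i ≠ j) {p : V}
    (hi : ω (a i) p = 0) (hj : ω (a j) p = 0) :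
    p = 0 ∨ p = a i ∨ p = a j ∨ p = a i + a j := by
  rw [← mem_span_pair_zmod_two, ← ha.orthogonal_span_pair hω hV hij]
  intro q hq
  rw [mem_span_pair_zmod_two] at hq
  rcases hq with rfl | rfl | rfl | rfl <;> simp [hi, hj]

lemma IsIsotropic.add_eq_third (ha : IsIsotropic ω a) (hω : ω.Nondegenerate)
    (hV : finrank (ZMod 2) V = 4) : a 0 + a 1 = a 2 := by
  rcases ha.eq_of_forall_apply_eq_zero hω hV zero_ne_one (ha.apply_eq_zero 0 2)
    (ha.apply_eq_zero 1 2) with h | h | h | h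
  · exact absurd h (ha.ne_zero 2)
  · exact absurd h (ha.injective.ne (by decide))
  · exact absurd h (ha.injective.ne (by decide))
  · exact h.symm

lemma IsIsotropic.exists_eq_of_forall_apply_eq_zero (ha : IsIsotropic ω a)
    (hω : ω.Nondegenerate) (hV : finrank (ZMod 2) V = 4) {p : V} (hp : p ≠ 0)
    (h : ∀ i, ω (a i) p = 0) : ∃ i, a i = p := by
  rcases ha.eq_of_forall_apply_eq_zero hω hV zero_ne_one (h 0) (h 1) with h | h | h | h
  · exact absurd h hp
  · exact ⟨0, h.symm⟩
  · exact ⟨1, h.symm⟩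
  · exact ⟨2, by rw [h, ha.add_eq_third hω hV]⟩

lemma IsIsotropic.exists_forall_apply_eq_zero_iff (ha : IsIsotropic ω a) (hω : ω.Nondegenerate)
    (hV : finrank (ZMod 2) V = 4) {p : V} (hp : p ≠ 0) (hap : ∀ i, a i ≠ p) :
    ∃ i, ∀ k, ω (a k) p = 0 ↔ i = k := by
  have exists_unique_zero : ∀ f : Fin 3 → ZMod 2, f 0 + f 1 = f 2 → (∃ i, f i ≠ 0) →
      ∃ i, ∀ k, f k = 0 ↔ i = k := by decide
  refine exists_unique_zero (fun k => ω (a k) p) ?_ ?_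
  · simp only [← ha.add_eq_third hω hV, map_add, LinearMap.add_apply]
  · by_contra! h
    obtain ⟨i, hi⟩ := ha.exists_eq_of_forall_apply_eq_zero hω hV hp h
    exact hap i hi

lemma IsIsotropic.exists_perm_apply_eq_zero_iff (ha : IsIsotropic ω a) (hb : IsIsotropic ω b)
    (hω : ω.Nondegenerate) (hsymm : ω.IsSymm) (hV : finrank (ZMod 2) V = 4)
    (hab : ∀ i j, a i ≠ b j) : ∃ σ : Perm (Fin 3), ∀ i j, ω (a i) (b j) = 0 ↔ σ i = j := by
  choose f hf using fun i => hb.exists_forall_apply_eq_zero_iff hω hV (ha.ne_zero i)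
    fun j => (hab i j).symm
  choose g hg using fun j => ha.exists_forall_apply_eq_zero_iff hω hV (hb.ne_zero j)
    fun i => hab i j
  have hfg : ∀ i j, f i = j ↔ g j = i := fun i j => by rw [← hf, ← hg, hsymm.eq]
  exact ⟨⟨f, g, fun i => (hfg i _).1 rfl, fun j => (hfg _ j).2 rfl⟩,
    fun i j => by rw [hsymm.eq, hf]; rfl⟩

/-- Two isotropic families such that each vector of one is orthogonal to exactly one vector of the
other, indexed so that orthogonal vectors carry the same index. -/
structure IsMatched {ι : Type*} (ω : LinearMap.BilinForm (ZMod 2) V) (a b : ι → V) : Prop where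
  left : IsIsotropic ω a
  right : IsIsotropic ω b
  apply_eq_zero_iff : ∀ i j, ω (a i) (b j) = 0 ↔ i = j

lemma IsIsotropic.isMatched (ha : IsIsotropic ω a) (hb : IsIsotropic ω b)
    (hω : ω.Nondegenerate) (hsymm : ω.IsSymm) (hV : finrank (ZMod 2) V = 4)
    (hab : ∀ i j, a i ≠ b j) (h0 : ω (a 0) (b 0) = 0) (h1 : ω (a 1) (b 1) = 0) :
    IsMatched ω a b := by
  obtain ⟨σ, hσ⟩ := ha.exists_perm_apply_eq_zero_iff hb hω hsymm hV hab
  have eq_one_of_fixed : ∀ σ : Perm (Fin 3), σ 0 = 0 → σ 1 = 1 → σ = 1 := by decide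
  obtain rfl := eq_one_of_fixed σ ((hσ 0 0).1 h0) ((hσ 1 1).1 h1)
  exact ⟨ha, hb, hσ⟩

lemma exists_involutive_forall_ne : ∀ σ : Perm (Fin 3), Function.Involutive σ → σ ≠ 1 →
    ∃ τ : Perm (Fin 3), Function.Involutive τ ∧ ∀ i, τ i ≠ σ i := by
  unfold Function.Involutive
  decide

namespace IsMatched

section Family

variable {ι : Type*} {a b : ι → V}

lemma apply_left_add_eq_zero_iff (h : IsMatched ω a b) (i j k : ι) :
    ω (a k) (a i + b j) = 0 ↔ k = j := by
  rw [map_add, h.left.apply_eq_zero, zero_add, h.apply_eq_zero_iff]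

lemma apply_add_right_eq_zero_iff (h : IsMatched ω a b) (i j k : ι) :
    ω (a i + b j) (b k) = 0 ↔ i = k := by
  rw [map_add, LinearMap.add_apply, h.right.apply_eq_zero, add_zero, h.apply_eq_zero_iff]

lemma injective2_add (h : IsMatched ω a b) : Function.Injective2 fun i j => a i + b j := by
  intro i k j l (hkl : a i + b j = a k + b l)
  constructor
  · rw [← h.apply_add_right_eq_zero_iff i j k, hkl, h.apply_add_right_eq_zero_iff]
  · rw [eq_comm, ← h.apply_left_add_eq_zero_iff i j l, hkl, h.apply_left_add_eq_zero_iff]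

lemma add_ne_left [Nontrivial ι] (h : IsMatched ω a b) (i j k : ι) : a i + b j ≠ a k := by
  intro hk
  have : ∀ l, l = j := fun l => by
    rw [← h.apply_left_add_eq_zero_iff i j l, hk, h.left.apply_eq_zero]
  exact not_subsingleton ι ⟨fun l m => (this l).trans (this m).symm⟩

lemma add_ne_right [Nontrivial ι] (h : IsMatched ω a b) (i j k : ι) : a i + b j ≠ b k := by
  intro hk
  have : ∀ l, i = l := fun l => by
    rw [← h.apply_add_right_eq_zero_iff i j l, hk, h.right.apply_eq_zero]
  exact not_subsingleton ι ⟨fun l m => (this l).symm.trans (this m)⟩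

lemma add_ne_zero [Nontrivial ι] (h : IsMatched ω a b) (i j : ι) : a i + b j ≠ 0 := by
  intro h0
  have : ∀ l, i = l := fun l => by
    rw [← h.apply_add_right_eq_zero_iff i j l, h0, map_zero, LinearMap.zero_apply]
  exact not_subsingleton ι ⟨fun l m => (this l).symm.trans (this m)⟩

lemma apply_add_add_eq_zero_iff (h : IsMatched ω a b) (hsymm : ω.IsSymm) (i j k l : ι) :
    ω (a i + b j) (a k + b l) = 0 ↔ (i = l ↔ k = j) := by
  have expand : ω (a i + b j) (a k + b l) = ω (a i) (b l) + ω (a k) (b j) := by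
    simp only [map_add, LinearMap.add_apply, h.left.apply_eq_zero, h.right.apply_eq_zero,
      hsymm.eq (b j), zero_add, add_comm]
  rw [expand, CharTwo.add_eq_zero, zmod_two_eq_iff, h.apply_eq_zero_iff, h.apply_eq_zero_iff]

lemma isIsotropic_graph_iff [Nontrivial ι] (h : IsMatched ω a b) (hsymm : ω.IsSymm) {σ : Perm ι} :
    IsIsotropic ω (fun i => a i + b (σ i)) ↔ Function.Involutive σ := by
  constructor
  · intro hσ i
    have horth := hσ.apply_eq_zero i (σ.symm i)
    rw [h.apply_add_add_eq_zero_iff hsymm, σ.apply_symm_apply] at horth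
    rw [← horth.1 rfl, σ.apply_symm_apply]
  · refine fun hσ => ⟨fun _ _ hij => (h.injective2_add hij).1, fun _ => h.add_ne_zero _ _,
      fun i k => ?_⟩
    rw [h.apply_add_add_eq_zero_iff hsymm, eq_comm, hσ.eq_iff, eq_comm]

end Family

lemma exists_eq_add (h : IsMatched ω a b) (hω : ω.Nondegenerate)
    (hV : finrank (ZMod 2) V = 4) {p : V} (hp : p ≠ 0) (hap : ∀ i, a i ≠ p)
    (hbp : ∀ j, b j ≠ p) : ∃ i j, p = a i + b j := by
  obtain ⟨j, hj⟩ := h.left.exists_forall_apply_eq_zero_iff hω hV hp hap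
  have horth : ∀ k, ω (a k) (p - b j) = 0 := fun k => by
    rw [map_sub, sub_eq_zero, zmod_two_eq_iff, hj, h.apply_eq_zero_iff, eq_comm]
  obtain ⟨i, hi⟩ := h.left.exists_eq_of_forall_apply_eq_zero hω hV
    (sub_ne_zero.2 (hbp j).symm) horth
  exact ⟨i, j, by rw [hi, sub_add_cancel]⟩

lemma exists_perm_eq_graph (h : IsMatched ω a b) (hω : ω.Nondegenerate) (hsymm : ω.IsSymm)
    (hV : finrank (ZMod 2) V = 4) (hc : IsIsotropic ω c)
    (hac : ∀ i j, a i ≠ c j) (hbc : ∀ i j, b i ≠ c j) :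
    ∃ φ σ : Perm (Fin 3), Function.Involutive σ ∧ ∀ i, c (φ i) = a i + b (σ i) := by
  choose f g hfg using fun k => h.exists_eq_add hω hV (hc.ne_zero k) (hac · k) (hbc · k)
  obtain ⟨φ, hφ⟩ := hc.exists_perm_apply_eq_zero_iff h.right hω hsymm hV fun i j => (hbc j i).symm
  obtain ⟨ψ, hψ⟩ := h.left.exists_perm_apply_eq_zero_iff hc hω hsymm hV hac
  have hf : ∀ k, φ k = f k := fun k => by
    rw [← hφ, hfg, h.apply_add_right_eq_zero_iff]
  have hg : ∀ k, ψ (g k) = k := fun k => by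
    rw [← hψ, hfg, h.apply_left_add_eq_zero_iff]
  have hgraph : c ∘ φ.symm = fun i => a i + b ((φ.symm.trans ψ.symm) i) := funext fun i => by
    rw [Function.comp_apply, hfg, ← hf, φ.apply_symm_apply, trans_apply, ψ.eq_symm_apply.2 (hg _)]
  refine ⟨φ.symm, φ.symm.trans ψ.symm, ?_, congrFun hgraph⟩
  rw [← h.isIsotropic_graph_iff hsymm, ← hgraph]
  exact hc.comp_injective φ.symm.injective

theorem exists_perm_eq_add_of_unextendible (h : IsMatched ω a b) (hω : ω.Nondegenerate)
    (hsymm : ω.IsSymm) (hV : finrank (ZMod 2) V = 4) (hc : IsIsotropic ω c)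
    (hac : ∀ i j, a i ≠ c j) (hbc : ∀ i j, b i ≠ c j)
    (hunext : ¬ ∃ d : Fin 3 → V, IsIsotropic ω d ∧
      ∀ i j, d i ≠ a j ∧ d i ≠ b j ∧ d i ≠ c j) :
    ∃ φ : Perm (Fin 3), ∀ i, c (φ i) = a i + b i := by
  obtain ⟨φ, σ, hσ, hφ⟩ := h.exists_perm_eq_graph hω hsymm hV hc hac hbc
  obtain rfl | hσ1 := eq_or_ne σ 1
  · exact ⟨φ, hφ⟩
  obtain ⟨τ, hτ, hτσ⟩ := exists_involutive_forall_ne σ hσ hσ1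
  refine absurd ⟨_, (h.isIsotropic_graph_iff hsymm).2 hτ, fun i j => ⟨h.add_ne_left _ _ _,
    h.add_ne_right _ _ _, fun hij => ?_⟩⟩ hunext
  rw [← φ.apply_symm_apply j, hφ] at hij
  obtain ⟨rfl, hστ⟩ := h.injective2_add hij
  exact hτσ _ hστ

end IsMatched

end BinarySpace

namespace PhaseEq

variable {m : Type*} {A B D E : Matrix m m ℂ}

lemma refl (A : Matrix m m ℂ) : PhaseEq A A :=
  ⟨1, one_ne_zero, (one_smul ℂ A).symm⟩

lemma symm : PhaseEq A B → PhaseEq B A := by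
  rintro ⟨c, hc, rfl⟩
  exact ⟨c⁻¹, inv_ne_zero hc, (inv_smul_smul₀ hc B).symm⟩

lemma trans : PhaseEq A B → PhaseEq B D → PhaseEq A D := by
  rintro ⟨c, hc, rfl⟩ ⟨d, hd, rfl⟩
  exact ⟨c * d, mul_ne_zero hc hd, smul_smul c d D⟩

lemma mul [Fintype m] : PhaseEq A B → PhaseEq D E → PhaseEq (A * D) (B * E) := by
  rintro ⟨c, hc, rfl⟩ ⟨d, hd, rfl⟩
  exact ⟨c * d, mul_ne_zero hc hd, smul_mul_smul_comm c B d E⟩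

lemma eq_zero (h : PhaseEq A 0) : A = 0 := by
  obtain ⟨c, -, rfl⟩ := h
  exact smul_zero c

lemma mul_comm_iff [Fintype m] (h : PhaseEq A B) : A * D = D * A ↔ B * D = D * B := by
  obtain ⟨c, hc, rfl⟩ := h
  rw [smul_mul_assoc, mul_smul_comm, smul_right_inj hc]

end PhaseEq

section Kron

variable {n : ℕ}

lemma kron_mul (A B : Fin n → Matrix (Fin 2) (Fin 2) ℂ) :
    kron n A * kron n B = kron n fun j => A j * B j := by
  ext v w
  simp only [Matrix.mul_apply, kron, ← Finset.prod_mul_distrib]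
  rw [Finset.prod_univ_sum, Fintype.piFinset_univ]

lemma kron_smul (c : Fin n → ℂ) (A : Fin n → Matrix (Fin 2) (Fin 2) ℂ) :
    (kron n fun j => c j • A j) = (∏ j, c j) • kron n A := by
  ext v w
  simp only [kron, Matrix.smul_apply, smul_eq_mul, Finset.prod_mul_distrib]

lemma kron_one : (kron n fun _ => 1) = 1 := by
  ext v w
  simp only [kron, Matrix.one_apply, Finset.prod_ite_zero, Finset.prod_const_one,
    Finset.mem_univ, true_imp_iff, funext_iff]

lemma PhaseEq.kron {A B : Fin n → Matrix (Fin 2) (Fin 2) ℂ} (h : ∀ j, PhaseEq (A j) (B j)) :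
    PhaseEq (kron n A) (kron n B) := by
  choose c hc hcA using h
  exact ⟨∏ j, c j, Finset.prod_ne_zero_iff.2 fun j _ => hc j, by rw [← kron_smul, funext hcA]⟩

end Kron

section PauliMatrix

/-- The single-qubit Pauli matrix equal to `X ^ a * Z ^ b` up to phase. The phase at `(1, 1)` is
chosen to give `Y` itself, so that the values are exactly the four Pauli matrices. -/
def pauliMatrix : ZMod 2 → ZMod 2 → Matrix (Fin 2) (Fin 2) ℂ
  | 0, 0 => pI
  | 1, 0 => pX
  | 1, 1 => pY
  | 0, 1 => pZ

/-- The sign character `t ↦ (-1) ^ t` of `ZMod 2`; it gives the factor by which two Pauli operators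
fail to commute. -/
def signChar : AddChar (ZMod 2) ℂ :=
  AddChar.zmodChar 2 (neg_one_sq (R := ℂ))

lemma signChar_one : signChar 1 = -1 := by
  simp [signChar, AddChar.zmodChar_apply, ZMod.val_one]

lemma signChar_eq_one_iff {t : ZMod 2} : signChar t = 1 ↔ t = 0 := by
  obtain rfl | rfl := zmod_two_eq_zero_or_one t
  · simp
  · norm_num [signChar_one]

lemma pauliMatrix_mul (a b a' b' : ZMod 2) :
    PhaseEq (pauliMatrix a b * pauliMatrix a' b') (pauliMatrix (a + a') (b + b')) := by
  set P := pauliMatrix a b * pauliMatrix a' b' with hP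
  set Q := pauliMatrix (a + a') (b + b') with hQ
  have h : P = (1 : ℂ) • Q ∨ P = Complex.I • Q ∨ P = (-Complex.I) • Q := by
    have h11 : (1 : ZMod 2) + 1 = 0 := by decide
    rw [hP, hQ]
    obtain rfl | rfl := zmod_two_eq_zero_or_one a <;>
      obtain rfl | rfl := zmod_two_eq_zero_or_one b <;>
      obtain rfl | rfl := zmod_two_eq_zero_or_one a' <;>
      obtain rfl | rfl := zmod_two_eq_zero_or_one b' <;>
      simp [pauliMatrix, pI, pX, pY, pZ, h11, Matrix.one_fin_two]
  rcases h with h | h | h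
  exacts [⟨1, one_ne_zero, h⟩, ⟨Complex.I, Complex.I_ne_zero, h⟩,
    ⟨-Complex.I, neg_ne_zero.2 Complex.I_ne_zero, h⟩]

lemma pauliMatrix_mul_comm (a b a' b' : ZMod 2) :
    pauliMatrix a b * pauliMatrix a' b' =
      signChar (a * b' - b * a') • (pauliMatrix a' b' * pauliMatrix a b) := by
  obtain rfl | rfl := zmod_two_eq_zero_or_one a <;>
    obtain rfl | rfl := zmod_two_eq_zero_or_one b <;>
    obtain rfl | rfl := zmod_two_eq_zero_or_one a' <;>
    obtain rfl | rfl := zmod_two_eq_zero_or_one b' <;>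
    simp [pauliMatrix, pI, pX, pY, pZ, signChar_one]

lemma exists_eq_pauliMatrix_iff {A : Matrix (Fin 2) (Fin 2) ℂ} :
    (∃ a b, A = pauliMatrix a b) ↔ A = pI ∨ A = pX ∨ A = pY ∨ A = pZ := by
  constructor
  · rintro ⟨a, b, rfl⟩
    obtain rfl | rfl := zmod_two_eq_zero_or_one a <;>
      obtain rfl | rfl := zmod_two_eq_zero_or_one b <;> simp [pauliMatrix]
  · rintro (rfl | rfl | rfl | rfl)
    exacts [⟨0, 0, rfl⟩, ⟨1, 0, rfl⟩, ⟨1, 1, rfl⟩, ⟨0, 1, rfl⟩]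

end PauliMatrix

/-- The standard symplectic form on `Kⁿ × Kⁿ`. Over `ZMod 2` it records commutation of the Pauli
operators labelled by pairs `(x, z)` of exponents of `X` and `Z`. -/
def symplecticForm (K : Type*) [CommRing K] (n : ℕ) :
    LinearMap.BilinForm K ((Fin n → K) × (Fin n → K)) :=
  LinearMap.mk₂ K (fun p q => p.1 ⬝ᵥ q.2 - p.2 ⬝ᵥ q.1)
    (fun p p' q => by simp only [Prod.fst_add, Prod.snd_add, add_dotProduct]; ring)
    (fun c p q => by simp [mul_sub])
    (fun p q q' => by simp only [Prod.fst_add, Prod.snd_add, dotProduct_add]; ring)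
    (fun c p q => by simp [mul_sub])

namespace symplecticForm

variable {K : Type*} [CommRing K] {n : ℕ}

lemma apply (p q : (Fin n → K) × (Fin n → K)) :
    symplecticForm K n p q = p.1 ⬝ᵥ q.2 - p.2 ⬝ᵥ q.1 :=
  rfl

lemma isAlt : (symplecticForm K n).IsAlt := fun p => by
  rw [apply, dotProduct_comm, sub_self]

lemma isSymm [CharP K 2] : (symplecticForm K n).IsSymm where
  eq p q := by
    rw [← isAlt.neg_eq, CharTwo.neg_eq]

lemma separatingLeft : (symplecticForm K n).SeparatingLeft := fun p hp => by
  refine Prod.ext (dotProduct_eq_zero _ fun v => ?_) (dotProduct_eq_zero _ fun v => ?_)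
  · simpa [apply] using hp (0, v)
  · simpa [apply] using hp (v, 0)

lemma nondegenerate : (symplecticForm K n).Nondegenerate :=
  (LinearMap.IsRefl.nondegenerate_iff_separatingLeft (B := symplecticForm K n)
    isAlt.isRefl).2 separatingLeft

end symplecticForm

section Pauli

variable {n : ℕ}

/-- The `n`-qubit Pauli operator with label `(x, z)` in the binary symplectic space; the phases are
those for which these are exactly the operators satisfying `IsPauliOp`. -/
def pauli (p : (Fin n → ZMod 2) × (Fin n → ZMod 2)) : QMat n :=
  kron n fun j => pauliMatrix (p.1 j) (p.2 j)

lemma isPauliOp_iff {M : QMat n} : IsPauliOp n M ↔ ∃ p, M = pauli p := by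
  simp only [IsPauliOp, ← exists_eq_pauliMatrix_iff]
  constructor
  · rintro ⟨W, hW, rfl⟩
    choose a b hab using hW
    exact ⟨(a, b), by rw [pauli, funext hab]⟩
  · rintro ⟨p, rfl⟩
    exact ⟨_, fun j => ⟨p.1 j, p.2 j, rfl⟩, rfl⟩

variable {p q : (Fin n → ZMod 2) × (Fin n → ZMod 2)}

lemma pauli_zero : pauli (0 : (Fin n → ZMod 2) × (Fin n → ZMod 2)) = 1 :=
  kron_one

lemma pauli_mul (p q : (Fin n → ZMod 2) × (Fin n → ZMod 2)) :
    PhaseEq (pauli p * pauli q) (pauli (p + q)) := by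
  rw [pauli, pauli, kron_mul]
  exact PhaseEq.kron fun j => pauliMatrix_mul _ _ _ _

lemma pauli_mul_comm (p q : (Fin n → ZMod 2) × (Fin n → ZMod 2)) :
    pauli p * pauli q = signChar (symplecticForm (ZMod 2) n p q) • (pauli q * pauli p) := by
  have hsign : signChar (symplecticForm (ZMod 2) n p q) =
      ∏ j, signChar (p.1 j * q.2 j - p.2 j * q.1 j) := by
    rw [symplecticForm.apply, dotProduct, dotProduct, ← Finset.sum_sub_distrib]
    exact map_prod signChar.toMonoidHom _ _
  rw [hsign, pauli, pauli, kron_mul, kron_mul, ← kron_smul]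
  simp only [← pauliMatrix_mul_comm]

lemma pauli_ne_zero (p : (Fin n → ZMod 2) × (Fin n → ZMod 2)) : pauli p ≠ 0 := by
  have hsq : PhaseEq 1 (pauli p * pauli p) := by
    rw [← pauli_zero, ← ZModModule.add_self p]
    exact (pauli_mul p p).symm
  intro hp
  rw [hp, zero_mul] at hsq
  exact one_ne_zero hsq.eq_zero

lemma pauli_commute_iff :
    pauli p * pauli q = pauli q * pauli p ↔ symplecticForm (ZMod 2) n p q = 0 := by
  have hne : pauli q * pauli p ≠ 0 := fun h =>
    pauli_ne_zero (q + p) (PhaseEq.eq_zero (h ▸ (pauli_mul q p).symm))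
  rw [pauli_mul_comm, ← signChar_eq_one_iff, ← smul_left_inj (R := ℂ) hne, one_smul]

lemma phaseEq_pauli_iff : PhaseEq (pauli p) (pauli q) ↔ p = q := by
  refine ⟨fun h => ?_, fun h => h ▸ .refl _⟩
  have horth : ∀ r, symplecticForm (ZMod 2) n p r = symplecticForm (ZMod 2) n q r := fun r => by
    rw [zmod_two_eq_iff, ← pauli_commute_iff, ← pauli_commute_iff, h.mul_comm_iff]
  refine sub_eq_zero.1 (symplecticForm.separatingLeft _ fun r => ?_)
  rw [map_sub, LinearMap.sub_apply, horth, sub_self]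

lemma pauli_injective :
    Function.Injective (pauli : (Fin n → ZMod 2) × (Fin n → ZMod 2) → QMat n) := fun p _ h =>
  phaseEq_pauli_iff.1 (h ▸ .refl (pauli p))

end Pauli

section Classes

variable {n : ℕ} {ι κ : Type*} {a : ι → (Fin n → ZMod 2) × (Fin n → ZMod 2)}
  {b : κ → (Fin n → ZMod 2) × (Fin n → ZMod 2)}

lemma classDisjoint_range_pauli_iff :
    ClassDisjoint (Set.range (pauli ∘ a)) (Set.range (pauli ∘ b)) ↔ ∀ i j, a i ≠ b j := by
  simp only [ClassDisjoint, Set.forall_mem_range, Function.comp_apply, phaseEq_pauli_iff, ne_eq]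

lemma isMaxClass_range_pauli_iff [Fintype ι] (hι : Fintype.card ι = 2 ^ n - 1) :
    IsMaxClass n (Set.range (pauli ∘ a)) ↔ IsIsotropic (symplecticForm (ZMod 2) n) a := by
  have hcard : (Set.range (pauli ∘ a)).ncard = 2 ^ n - 1 ↔ Function.Injective a := by
    rw [← hι, ← Nat.card_eq_fintype_card, ← Set.ncard_univ, ← Set.image_univ, Set.ncard_image_iff,
      Set.injOn_univ, pauli_injective.of_comp_iff]
  have hone : ∀ i, pauli (a i) = 1 ↔ a i = 0 := fun i => by
    rw [← pauli_zero, pauli_injective.eq_iff]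
  constructor
  · rintro ⟨-, hncard, hpauli, hcomm, -⟩
    refine ⟨hcard.1 hncard, fun i => ?_, fun i j => ?_⟩
    · exact (hone i).not.1 (hpauli _ ⟨i, rfl⟩).2
    · exact pauli_commute_iff.1 (hcomm _ ⟨i, rfl⟩ _ ⟨j, rfl⟩)
  · intro ha
    refine ⟨Set.finite_range _, hcard.2 ha.injective, ?_, ?_, ?_⟩
    · rintro _ ⟨i, rfl⟩
      exact ⟨isPauliOp_iff.2 ⟨a i, rfl⟩, (hone i).not.2 (ha.ne_zero i)⟩
    · rintro _ ⟨i, rfl⟩ _ ⟨j, rfl⟩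
      exact pauli_commute_iff.2 (ha.apply_eq_zero i j)
    · rintro _ ⟨i, rfl⟩ _ ⟨j, rfl⟩ hij h
      exact hij (congrArg pauli (phaseEq_pauli_iff.1 h))

lemma IsMaxClass.exists_eq_range [Fintype ι] {C : Set (QMat n)} (hC : IsMaxClass n C)
    (hι : Fintype.card ι = 2 ^ n - 1) : ∃ M : ι → QMat n, Set.range M = C := by
  have : Finite C := hC.1
  have hcard : Nat.card ι = Nat.card C := by
    rw [Nat.card_eq_fintype_card, hι, ← hC.2.1, Nat.card_coe_set_eq]
  obtain ⟨e⟩ := Finite.card_eq.1 hcard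
  exact ⟨_, (e.surjective.range_comp _).trans Subtype.range_coe⟩

lemma IsMaxClass.exists_eq_pauli_comp [Fintype ι] {M : ι → QMat n}
    (hM : IsMaxClass n (Set.range M)) (hι : Fintype.card ι = 2 ^ n - 1) :
    ∃ a, M = pauli ∘ a ∧ IsIsotropic (symplecticForm (ZMod 2) n) a := by
  choose a ha using fun i => isPauliOp_iff.1 (hM.2.2.1 (M i) ⟨i, rfl⟩).1
  obtain rfl : M = pauli ∘ a := funext ha
  exact ⟨a, rfl, (isMaxClass_range_pauli_iff hι).1 hM⟩

end Classes

theorem exists_range_eq_and_phaseEq_mul_of_unextendible {M N : Fin 3 → QMat 2} {C : Set (QMat 2)}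
    (hM : IsMaxClass 2 (Set.range M)) (hN : IsMaxClass 2 (Set.range N)) (hC : IsMaxClass 2 C)
    (hMN : ClassDisjoint (Set.range M) (Set.range N)) (hMC : ClassDisjoint (Set.range M) C)
    (hNC : ClassDisjoint (Set.range N) C)
    (hunext : ¬ ∃ R, IsMaxClass 2 R ∧
      ∀ U ∈ R, ∀ V ∈ Set.range M ∪ Set.range N ∪ C, ¬ PhaseEq U V)
    (h0 : M 0 * N 0 = N 0 * M 0) (h1 : M 1 * N 1 = N 1 * M 1) :
    ∃ K : Fin 3 → QMat 2, Set.range K = C ∧ ∀ i, PhaseEq (K i) (M i * N i) := by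
  have hcard : Fintype.card (Fin 3) = 2 ^ 2 - 1 := by simp
  have hV : finrank (ZMod 2) ((Fin 2 → ZMod 2) × (Fin 2 → ZMod 2)) = 4 := by simp
  obtain ⟨K, rfl⟩ := hC.exists_eq_range hcard
  obtain ⟨a, rfl, ha⟩ := hM.exists_eq_pauli_comp hcard
  obtain ⟨b, rfl, hb⟩ := hN.exists_eq_pauli_comp hcard
  obtain ⟨c, rfl, hc⟩ := hC.exists_eq_pauli_comp hcard
  rw [classDisjoint_range_pauli_iff] at hMN hMC hNC
  have hab : IsMatched (symplecticForm (ZMod 2) 2) a b :=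
    ha.isMatched hb symplecticForm.nondegenerate symplecticForm.isSymm hV hMN
      (pauli_commute_iff.1 h0) (pauli_commute_iff.1 h1)
  obtain ⟨φ, hφ⟩ : ∃ φ : Perm (Fin 3), ∀ i, c (φ i) = a i + b i := by
    refine hab.exists_perm_eq_add_of_unextendible symplecticForm.nondegenerate
      symplecticForm.isSymm hV hc hMC hNC ?_
    rintro ⟨d, hd, hdisj⟩
    refine hunext ⟨_, (isMaxClass_range_pauli_iff hcard).2 hd, ?_⟩
    rintro _ ⟨i, rfl⟩ _ ((⟨j, rfl⟩ | ⟨j, rfl⟩) | ⟨j, rfl⟩) h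
    exacts [(hdisj i j).1 (phaseEq_pauli_iff.1 h), (hdisj i j).2.1 (phaseEq_pauli_iff.1 h),
      (hdisj i j).2.2 (phaseEq_pauli_iff.1 h)]
  refine ⟨pauli ∘ c ∘ φ, ?_, fun i => ?_⟩
  · rw [← Function.comp_assoc, φ.surjective.range_comp]
  · simpa only [Function.comp_apply, hφ] using (pauli_mul (a i) (b i)).symm

/-- In an unextendible family of three pairwise disjoint maximal commuting
Pauli classes in `d = 4`, writing `C 0 = {U₁, V₁, W₁}` and `C 1 = {U₂, V₂, W₂}` with
`W₁ ~ U₁V₁`, `W₂ ~ U₂V₂`, `[U₁, U₂] = 0` and `[V₁, V₂] = 0`, the third class `C 2`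
consists, up to phase, exactly of `U₁U₂`, `V₁V₂`, and `U₁V₁U₂V₂`. -/
theorem third_class_of_unextendible_triple_d4 (C : Fin 3 → Set (QMat 2))
    (hmax : ∀ i, IsMaxClass 2 (C i))
    (hdisj : ∀ i j, i ≠ j → ClassDisjoint (C i) (C j))
    (hunext : ¬ ∃ R : Set (QMat 2), IsMaxClass 2 R ∧
        ∀ U ∈ R, ∀ V ∈ C 0 ∪ C 1 ∪ C 2, ¬ PhaseEq U V)
    (U₁ V₁ W₁ U₂ V₂ W₂ : QMat 2)
    (hC0 : C 0 = {U₁, V₁, W₁}) (hC1 : C 1 = {U₂, V₂, W₂})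
    (hW1 : PhaseEq W₁ (U₁ * V₁)) (hW2 : PhaseEq W₂ (U₂ * V₂))
    (hU : U₁ * U₂ = U₂ * U₁) (hV : V₁ * V₂ = V₂ * V₁) :
    (∀ M ∈ C 2, PhaseEq M (U₁ * U₂) ∨ PhaseEq M (V₁ * V₂) ∨
      PhaseEq M (U₁ * V₁ * (U₂ * V₂))) ∧
    (∃ M ∈ C 2, PhaseEq M (U₁ * U₂)) ∧
    (∃ M ∈ C 2, PhaseEq M (V₁ * V₂)) ∧
    (∃ M ∈ C 2, PhaseEq M (U₁ * V₁ * (U₂ * V₂))) := by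
  have hM : C 0 = Set.range ![U₁, V₁, W₁] := by
    rw [hC0, range_cons, range_cons_cons_empty, Set.singleton_union]
  have hN : C 1 = Set.range ![U₂, V₂, W₂] := by
    rw [hC1, range_cons, range_cons_cons_empty, Set.singleton_union]
  obtain ⟨K, hK, hprod⟩ := exists_range_eq_and_phaseEq_mul_of_unextendible
    (hM ▸ hmax 0) (hN ▸ hmax 1) (hmax 2)
    (hM ▸ hN ▸ hdisj 0 1 (by decide)) (hM ▸ hdisj 0 2 (by decide)) (hN ▸ hdisj 1 2 (by decide))
    (hM ▸ hN ▸ hunext) hU hV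
  have hKU : PhaseEq (K 0) (U₁ * U₂) := hprod 0
  have hKV : PhaseEq (K 1) (V₁ * V₂) := hprod 1
  have hKW : PhaseEq (K 2) (U₁ * V₁ * (U₂ * V₂)) := (hprod 2).trans (hW1.mul hW2)
  rw [← hK, Set.forall_mem_range, Fin.forall_fin_succ, Fin.forall_fin_two]
  exact ⟨⟨.inl hKU, .inr (.inl hKV), .inr (.inr hKW)⟩,
    ⟨_, ⟨0, rfl⟩, hKU⟩, ⟨_, ⟨1, rfl⟩, hKV⟩, ⟨_, ⟨2, rfl⟩, hKW⟩⟩
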